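/- Let (X, 𝒜, μ) be a complete measure space with a partial order ≤, let I ⊆ ℝ be a non-empty closed interval, let q ∈ (1, ∞), and let f ∈ L^q(X, μ, ℝ). Then every minimizing sequence (p_n) for the functional g ↦ ‖f − g‖_q^q on L^q_≤(X, μ, I) converges in the q-norm to the unique minimizer p(f). -/

import Mathlib

open MeasureTheory Filter
open scoped ENNReal

/-- The elements of `L^q(X, μ, ℝ)` having a representative that is isotonic off a `μ`-null
set and takes values in `I` almost everywhere. -/
def isoLq {X : Type*} [MeasurableSpace X] [PartialOrder X]
    (μ : Measure X) (q : ℝ≥0∞) (I : Set ℝ) : Set (Lp ℝ q μ) :=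
  {f | ∃ f₀ : X → ℝ, (⇑f) =ᵐ[μ] f₀ ∧
    (∃ N : Set X, μ N = 0 ∧ ∀ x ∉ N, ∀ y ∉ N, x ≤ y → f₀ x ≤ f₀ y) ∧
    ∀ᵐ x ∂μ, f₀ x ∈ I}

lemma aux_strict {r : ℝ} (hr : 1 < r) {a b : ℝ} (hab : a ≠ b) :
    |(a + b) / 2| ^ r < (|a| ^ r + |b| ^ r) / 2 := by
  by_cases h : |a| = |b|
  · have hb : a = -b := by
      rcases abs_eq_abs.1 h with h | h
      · exact absurd h hab
      · exact h
    have hb0 : b ≠ 0 := by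
      rintro rfl
      apply hab
      simpa using hb
    have h1 : 0 < |b| ^ r := Real.rpow_pos_of_pos (abs_pos.2 hb0) _
    rw [h, hb]
    simp only [neg_add_cancel, zero_div, abs_zero]
    rw [Real.zero_rpow (by linarith)]
    linarith
  · have h1 := (strictConvexOn_rpow hr).2 (abs_nonneg a) (abs_nonneg b) h
      (by norm_num : (0:ℝ) < 1 / 2) (by norm_num : (0:ℝ) < 1 / 2) (by norm_num)
    simp only [smul_eq_mul] at h1
    have h2 : |(a + b) / 2| ≤ 1 / 2 * |a| + 1 / 2 * |b| := by
      rw [abs_div, abs_two]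
      have := abs_add_le a b
      linarith
    have h3 : |(a + b) / 2| ^ r ≤ (1 / 2 * |a| + 1 / 2 * |b|) ^ r :=
      Real.rpow_le_rpow (abs_nonneg _) h2 (by linarith)
    linarith

lemma aux_le {r : ℝ} (hr : 1 < r) (a b : ℝ) :
    |(a + b) / 2| ^ r ≤ (|a| ^ r + |b| ^ r) / 2 := by
  by_cases h : a = b
  · subst h
    simp
  · exact (aux_strict hr h).le

lemma aux_pointwise {r : ℝ} (hr : 1 < r) {ε : ℝ} (hε : 0 < ε) :
    ∃ C : ℝ, 0 ≤ C ∧ ∀ a b : ℝ, |a - b| ^ r ≤ ε * (|a| ^ r + |b| ^ r) +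
      C * ((|a| ^ r + |b| ^ r) / 2 - |(a + b) / 2| ^ r) := by
  have hr0 : 0 ≤ r := by linarith
  have key : ∃ C : ℝ, 0 ≤ C ∧ ∀ x ∈ Metric.sphere (0 : ℝ × ℝ) 1,
      |x.1 - x.2| ^ r ≤ ε * (|x.1| ^ r + |x.2| ^ r) +
      C * ((|x.1| ^ r + |x.2| ^ r) / 2 - |(x.1 + x.2) / 2| ^ r) := by
    have c1 : Continuous fun x : ℝ × ℝ => |x.1 - x.2| ^ r :=
      (by fun_prop : Continuous fun x : ℝ × ℝ => |x.1 - x.2|).rpow_const (fun _ => Or.inr hr0)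
    have c2 : Continuous fun x : ℝ × ℝ => |x.1| ^ r :=
      (by fun_prop : Continuous fun x : ℝ × ℝ => |x.1|).rpow_const (fun _ => Or.inr hr0)
    have c3 : Continuous fun x : ℝ × ℝ => |x.2| ^ r :=
      (by fun_prop : Continuous fun x : ℝ × ℝ => |x.2|).rpow_const (fun _ => Or.inr hr0)
    have c4 : Continuous fun x : ℝ × ℝ => |(x.1 + x.2) / 2| ^ r :=
      (by fun_prop : Continuous fun x : ℝ × ℝ => |(x.1 + x.2) / 2|).rpow_const
        (fun _ => Or.inr hr0)
    have c5 : Continuous fun x : ℝ × ℝ =>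
      (|x.1| ^ r + |x.2| ^ r) / 2 - |(x.1 + x.2) / 2| ^ r := by fun_prop
    let S : Set (ℝ × ℝ) := Metric.sphere (0 : ℝ × ℝ) 1 ∩
      {x | ε * (|x.1| ^ r + |x.2| ^ r) ≤ |x.1 - x.2| ^ r}
    have hS : IsCompact S := (isCompact_sphere _ _).inter_right
      (isClosed_le (by fun_prop) c1)
    rcases S.eq_empty_or_nonempty with he | hne
    · refine ⟨0, le_rfl, fun x hx => ?_⟩
      by_contra! hcon
      have : x ∈ S := ⟨hx, by simp only [Set.mem_ofPred_eq]; linarith⟩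
      rw [he] at this
      exact this
    · obtain ⟨y, hyS, hy⟩ := hS.exists_isMinOn hne c5.continuousOn
      obtain ⟨z, hzS, hz⟩ := hS.exists_isMaxOn hne c1.continuousOn
      set m := (|y.1| ^ r + |y.2| ^ r) / 2 - |(y.1 + y.2) / 2| ^ r with hm
      have hmpos : 0 < m := by
        have hne' : y.1 ≠ y.2 := by
          intro h
          have h1 : ε * (|y.1| ^ r + |y.2| ^ r) ≤ |y.1 - y.2| ^ r := hyS.2
          have h0 : ‖y‖ = 1 := by simpa using hyS.1
          rw [h, sub_self, abs_zero, Real.zero_rpow (by linarith)] at h1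
          have h2 : |y.2| = 1 := by
            rw [Prod.norm_def, h, max_self] at h0
            exact h0
          rw [h2, Real.one_rpow] at h1
          linarith
        have := aux_strict hr hne'
        linarith
      have hM : 0 ≤ |z.1 - z.2| ^ r := by positivity
      refine ⟨|z.1 - z.2| ^ r / m, by positivity, fun x hx => ?_⟩
      have hp : 0 ≤ ε * (|x.1| ^ r + |x.2| ^ r) := by positivity
      have hG := aux_le hr x.1 x.2
      by_cases hxS : x ∈ S
      · have h1 : m ≤ (|x.1| ^ r + |x.2| ^ r) / 2 - |(x.1 + x.2) / 2| ^ r := hy hxS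
        have h2 : |x.1 - x.2| ^ r ≤ |z.1 - z.2| ^ r := hz hxS
        have h3 : |z.1 - z.2| ^ r / m * m ≤ |z.1 - z.2| ^ r / m *
          ((|x.1| ^ r + |x.2| ^ r) / 2 - |(x.1 + x.2) / 2| ^ r) :=
          mul_le_mul_of_nonneg_left h1 (by positivity)
        rw [div_mul_cancel₀ _ hmpos.ne'] at h3
        linarith
      · have h1 : |x.1 - x.2| ^ r < ε * (|x.1| ^ r + |x.2| ^ r) := by
          by_contra! hcon
          exact hxS ⟨hx, hcon⟩
        have h3 : 0 ≤ |z.1 - z.2| ^ r / m *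
          ((|x.1| ^ r + |x.2| ^ r) / 2 - |(x.1 + x.2) / 2| ^ r) :=
          mul_nonneg (by positivity) (by linarith)
        linarith
  obtain ⟨C, hC, h⟩ := key
  refine ⟨C, hC, fun a b => ?_⟩
  by_cases h0 : ((a, b) : ℝ × ℝ) = 0
  · rw [Prod.mk_eq_zero] at h0
    simp [h0.1, h0.2, Real.zero_rpow (by linarith : r ≠ 0)]
  · set t := ‖((a, b) : ℝ × ℝ)‖ with ht
    have htpos : 0 < t := norm_pos_iff.2 h0
    have hx := h (t⁻¹ • (a, b)) (by
      rw [mem_sphere_zero_iff_norm, norm_smul, norm_inv, Real.norm_eq_abs, abs_of_pos htpos]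
      exact inv_mul_cancel₀ htpos.ne')
    have hom : ∀ c : ℝ, |t⁻¹ * c| ^ r = (t ^ r)⁻¹ * |c| ^ r := by
      intro c
      rw [abs_mul, Real.mul_rpow (abs_nonneg _) (abs_nonneg _), abs_of_pos (inv_pos.2 htpos),
        Real.inv_rpow htpos.le]
    simp only [Prod.smul_fst, Prod.smul_snd, smul_eq_mul] at hx
    rw [← mul_sub, ← mul_add, mul_div_assoc, hom, hom, hom, hom] at hx
    have htr : 0 < t ^ r := Real.rpow_pos_of_pos htpos _
    have h2 := mul_le_mul_of_nonneg_left hx htr.le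
    have e : ∀ s, t ^ r * ((t ^ r)⁻¹ * s) = s := fun s => mul_inv_cancel_left₀ htr.ne' s
    rw [e] at h2
    calc _ ≤ _ := h2
      _ = t ^ r * ((t ^ r)⁻¹ * (ε * (|a| ^ r + |b| ^ r) +
      C * ((|a| ^ r + |b| ^ r) / 2 - |(a + b) / 2| ^ r))) := by ring
      _ = _ := e _

section
variable {X : Type*} [MeasurableSpace X] {μ : Measure X} {q : ℝ≥0∞}

lemma aux_norm (hq0 : q ≠ 0) (hq : q ≠ ∞) (u : Lp ℝ q μ) :
    ‖u‖ ^ q.toReal = ∫ x, |u x| ^ q.toReal ∂μ := by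
  have hr : 0 < q.toReal := ENNReal.toReal_pos hq0 hq
  rw [Lp.norm_def, (Lp.memLp u).eLpNorm_eq_integral_rpow_norm hq0 hq, ENNReal.toReal_ofReal,
    ← Real.rpow_mul, inv_mul_cancel₀ hr.ne', Real.rpow_one]
  · rfl
  · exact integral_nonneg fun x => by positivity
  · positivity

lemma aux_int (hq0 : q ≠ 0) (hq : q ≠ ∞) (u : Lp ℝ q μ) :
    Integrable (fun x => |u x| ^ q.toReal) μ :=
  (Lp.memLp u).integrable_norm_rpow hq0 hq

lemma aux_Lp (hq1 : 1 < q) (hq : q ≠ ∞) {ε : ℝ} (hε : 0 < ε) :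
    ∃ C : ℝ, 0 ≤ C ∧ ∀ u v : Lp ℝ q μ, ‖u - v‖ ^ q.toReal ≤
      ε * (‖u‖ ^ q.toReal + ‖v‖ ^ q.toReal) +
      C * ((‖u‖ ^ q.toReal + ‖v‖ ^ q.toReal) / 2 - ‖(1 / 2 : ℝ) • (u + v)‖ ^ q.toReal) := by
  have hq0 : q ≠ 0 := (zero_lt_one.trans hq1).ne'
  have hr : 1 < q.toReal := by
    simpa using (ENNReal.toReal_lt_toReal ENNReal.one_ne_top hq).2 hq1
  obtain ⟨C, hC, h⟩ := aux_pointwise hr hε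
  refine ⟨C, hC, fun u v => ?_⟩
  simp only [aux_norm hq0 hq]
  have iu := aux_int hq0 hq u
  have iv := aux_int hq0 hq v
  have iw := aux_int hq0 hq ((1 / 2 : ℝ) • (u + v))
  have i1 : Integrable (fun x => |u x| ^ q.toReal + |v x| ^ q.toReal) μ := iu.add iv
  have i2 : Integrable (fun x => (|u x| ^ q.toReal + |v x| ^ q.toReal) / 2 -
      |((1 / 2 : ℝ) • (u + v) : Lp ℝ q μ) x| ^ q.toReal) μ := (i1.div_const 2).sub iw
  rw [← integral_add iu iv, ← integral_div, ← integral_sub (i1.div_const 2) iw,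
    ← integral_const_mul, ← integral_const_mul, ← integral_add (i1.const_mul ε)
      (i2.const_mul C)]
  refine integral_mono_ae (aux_int hq0 hq (u - v))
    ((i1.const_mul ε).add (i2.const_mul C)) ?_
  filter_upwards [Lp.coeFn_sub u v, Lp.coeFn_smul (1 / 2 : ℝ) (u + v), Lp.coeFn_add u v]
    with x h1 h2 h3
  have h4 := h (u x) (v x)
  rw [show (u x + v x) / 2 = ((1 / 2 : ℝ) • (u + v) : Lp ℝ q μ) x by
    rw [h2, Pi.smul_apply, h3, Pi.add_apply, smul_eq_mul]; ring] at h4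
  simp only [h1, Pi.sub_apply, Pi.add_apply]
  exact h4

lemma aux_mid [PartialOrder X] {I : Set ℝ} (hI : I.OrdConnected) {g h : Lp ℝ q μ}
    (hg : g ∈ isoLq μ q I) (hh : h ∈ isoLq μ q I) :
    (1 / 2 : ℝ) • (g + h) ∈ isoLq μ q I := by
  obtain ⟨g₀, g1, ⟨N, hN, g2⟩, g3⟩ := hg
  obtain ⟨h₀, h1, ⟨M, hM, h2⟩, h3⟩ := hh
  refine ⟨fun x => 1 / 2 * (g₀ x + h₀ x), ?_, ⟨N ∪ M, measure_union_null hN hM, ?_⟩, ?_⟩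
  · filter_upwards [g1, h1, Lp.coeFn_smul (1 / 2 : ℝ) (g + h), Lp.coeFn_add g h]
      with x e1 e2 e3 e4
    rw [e3, Pi.smul_apply, e4, Pi.add_apply, e1, e2, smul_eq_mul]
  · intro x hx y hy hxy
    simp only [Set.mem_union, not_or] at hx hy
    have a1 := g2 x hx.1 y hy.1 hxy
    have a2 := h2 x hx.2 y hy.2 hxy
    dsimp only
    linarith
  · filter_upwards [g3, h3] with x e1 e2
    have := hI.convex e1 e2 (by norm_num : (0:ℝ) ≤ 1 / 2) (by norm_num : (0:ℝ) ≤ 1 / 2)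
      (by norm_num)
    rw [mul_add]
    simpa only [smul_eq_mul] using this
end

/-- For `q ∈ (1, ∞)`, every minimizing sequence `(pₙ)` of the functional
`g ↦ ‖f − g‖_q^q` on `L^q_≤(X, μ, I)` converges in the `q`-norm to the unique minimizer
`p(f)`. -/
theorem stmt_6 {X : Type*} [MeasurableSpace X] [PartialOrder X]
    (μ : Measure X) [μ.IsComplete] (I : Set ℝ) (hIcl : IsClosed I)
    (hIint : I.OrdConnected) (hIne : I.Nonempty)
    (q : ℝ≥0∞) [Fact (1 ≤ q)] (hq1 : 1 < q) (hq : q ≠ ∞)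
    (f pf : Lp ℝ q μ)
    (hpf : pf ∈ isoLq μ q I ∧
      ‖f - pf‖ = ⨅ h : isoLq μ q I, ‖f - (h : Lp ℝ q μ)‖)
    (pn : ℕ → Lp ℝ q μ) (hmem : ∀ n, pn n ∈ isoLq μ q I)
    (hmin : Tendsto (fun n => ‖f - pn n‖ ^ q.toReal) atTop
      (nhds (⨅ h : isoLq μ q I, ‖f - (h : Lp ℝ q μ)‖ ^ q.toReal))) :
    Tendsto pn atTop (nhds pf) := by
  have hq0 : q ≠ 0 := (zero_lt_one.trans hq1).ne'
  have hr : 0 < q.toReal := ENNReal.toReal_pos hq0 hq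
  obtain ⟨hpm, hpe⟩ := hpf
  have hle : ∀ h ∈ isoLq μ q I, ‖f - pf‖ ≤ ‖f - h‖ := by
    intro h hh
    rw [hpe]
    exact ciInf_le (f := fun h : isoLq μ q I => ‖f - (h : Lp ℝ q μ)‖)
      ⟨0, by rintro _ ⟨x, rfl⟩; exact norm_nonneg _⟩ ⟨h, hh⟩
  have hler : ∀ h ∈ isoLq μ q I, ‖f - pf‖ ^ q.toReal ≤ ‖f - h‖ ^ q.toReal := fun h hh =>
    Real.rpow_le_rpow (norm_nonneg _) (hle h hh) hr.le
  have hinf : (⨅ h : isoLq μ q I, ‖f - (h : Lp ℝ q μ)‖ ^ q.toReal) = ‖f - pf‖ ^ q.toReal := by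
    haveI : Nonempty (isoLq μ q I) := ⟨⟨pf, hpm⟩⟩
    refine le_antisymm ?_ (le_ciInf fun h => hler h h.2)
    exact ciInf_le (f := fun h : isoLq μ q I => ‖f - (h : Lp ℝ q μ)‖ ^ q.toReal)
      ⟨0, by rintro _ ⟨x, rfl⟩; exact Real.rpow_nonneg (norm_nonneg _) _⟩ ⟨pf, hpm⟩
  rw [hinf] at hmin
  set d := ‖f - pf‖ ^ q.toReal with hd
  have hd0 : 0 ≤ d := Real.rpow_nonneg (norm_nonneg _) _
  have main : Tendsto (fun n => ‖pn n - pf‖ ^ q.toReal) atTop (nhds 0) := by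
    rw [Metric.tendsto_atTop']
    intro η hη
    obtain ⟨C, hC, hCu⟩ := aux_Lp (μ := μ) hq1 hq
      (ε := η / (2 * (2 * d + 1))) (by positivity)
    have hlim : Tendsto (fun n => η / (2 * (2 * d + 1)) * (d + ‖f - pn n‖ ^ q.toReal) +
        C * ((d + ‖f - pn n‖ ^ q.toReal) / 2 - d)) atTop
        (nhds (η / (2 * (2 * d + 1)) * (d + d) + C * ((d + d) / 2 - d))) :=
      (((hmin.const_add d).const_mul _).add
        ((((hmin.const_add d).div_const 2).sub_const d).const_mul C))
    have hlt : η / (2 * (2 * d + 1)) * (d + d) + C * ((d + d) / 2 - d) < η := by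
      have : η / (2 * (2 * d + 1)) * (d + d) = η * (2 * d / (2 * (2 * d + 1))) := by
        field_simp
        ring
      rw [this]
      have h2 : 2 * d / (2 * (2 * d + 1)) < 1 := by
        rw [div_lt_one (by positivity)]
        linarith
      have h3 : C * ((d + d) / 2 - d) = 0 := by ring
      rw [h3]
      nlinarith
    obtain ⟨N, hN⟩ := eventually_atTop.1 (hlim.eventually_lt_const hlt)
    refine ⟨N, fun n hn => ?_⟩
    have hb := hCu (f - pf) (f - pn n)
    have hmid := hler _ (aux_mid hIint hpm (hmem n))
    have e1 : f - pf - (f - pn n) = pn n - pf := by abel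
    have e2 : (1 / 2 : ℝ) • (f - pf + (f - pn n)) = f - (1 / 2 : ℝ) • (pf + pn n) := by
      module
    rw [e1, e2, ← hd] at hb
    have h5 := hN n hn.le
    have h6 : C * ((d + ‖f - pn n‖ ^ q.toReal) / 2 -
        ‖f - (1 / 2 : ℝ) • (pf + pn n)‖ ^ q.toReal) ≤
        C * ((d + ‖f - pn n‖ ^ q.toReal) / 2 - d) :=
      mul_le_mul_of_nonneg_left (by linarith) hC
    rw [Real.dist_eq, sub_zero, abs_of_nonneg (Real.rpow_nonneg (norm_nonneg _) _)]
    linarith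
  rw [tendsto_iff_norm_sub_tendsto_zero]
  have := main.rpow_const (p := q.toReal⁻¹) (Or.inr (by positivity))
  rw [Real.zero_rpow (by positivity)] at this
  refine this.congr fun n => ?_
  rw [← Real.rpow_mul (norm_nonneg _), mul_inv_cancel₀ hr.ne', Real.rpow_one]
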